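/- For every (d1,d2) ∈ ℝ₊², the rate-distortion function at one maximal distortion collapses to a conditional RD function: R(d1, d2max) = R_{X|Y}(d1) and R(d1max, d2) = R_{Y|X}(d2), where d1max and d2max are the maximal values of δ1 and δ2 respectively. -/

import Mathlib

open scoped BigOperators Classical

noncomputable section

namespace TWR

/-- Base-2 Shannon entropy of a finitely supported distribution (with the
convention `0 * log 0 = 0`, automatic since `Real.logb 2 0 = 0`). -/
def H2 {α : Type} [Fintype α] (p : α → ℝ) : ℝ :=
  -∑ a, p a * Real.logb 2 (p a)

/-- `p` is a probability mass function. -/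
def IsPmf {α : Type} [Fintype α] (p : α → ℝ) : Prop :=
  (∀ a, 0 ≤ p a) ∧ ∑ a, p a = 1

/-- `W` is a conditional pmf. -/
def IsCondPmf {α β : Type} [Fintype β] (W : α → β → ℝ) : Prop :=
  ∀ a, IsPmf (W a)

/-- Mutual information `I(A;B)` (base 2) of a joint pmf on `α × β`. -/
def MI {α β : Type} [Fintype α] [Fintype β] (p : α × β → ℝ) : ℝ :=
  H2 (fun a => ∑ b, p (a, b)) + H2 (fun b => ∑ a, p (a, b)) - H2 p

/-- Conditional entropy `H(A|B)` of a joint pmf on `α × β`. -/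
def condH {α β : Type} [Fintype α] [Fintype β] (p : α × β → ℝ) : ℝ :=
  H2 p - H2 (fun b => ∑ a, p (a, b))

/-- Conditional mutual information `I(A;C|B)` of a joint pmf on `α × β × γ`,
conditioning on the middle coordinate (`I(A;C|B) = H(A,B)+H(B,C)-H(A,B,C)-H(B)`). -/
def condMI {α β γ : Type} [Fintype α] [Fintype β] [Fintype γ] (p : α × β × γ → ℝ) : ℝ :=
  H2 (fun ab : α × β => ∑ c, p (ab.1, ab.2, c)) +
    H2 (fun bc : β × γ => ∑ a, p (a, bc.1, bc.2)) -
    H2 p - H2 (fun b : β => ∑ a, ∑ c, p (a, b, c))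

/-- Markov chain `A − B − C` for a joint pmf on `α × β × γ`. -/
def Markov {α β γ : Type} [Fintype α] [Fintype β] [Fintype γ] (p : α × β × γ → ℝ) : Prop :=
  ∀ a b c, p (a, b, c) * (∑ a', ∑ c', p (a', b, c')) =
    (∑ c', p (a, b, c')) * (∑ a', p (a', b, c))

variable {𝒳 𝒴 Xh Yh 𝒲 𝒰 𝒱 : Type}
variable [Fintype 𝒳] [Fintype 𝒴] [Fintype Xh] [Fintype Yh]
variable [Fintype 𝒲] [Fintype 𝒰] [Fintype 𝒱]

/-- The i.i.d. block source. -/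
def iid (q : 𝒳 × 𝒴 → ℝ) (n : ℕ) : (Fin n → 𝒳) × (Fin n → 𝒴) → ℝ :=
  fun xy => ∏ i, q (xy.1 i, xy.2 i)

/-- Average distortion at receiver 1 of the RD code `(f, g1, ·)`. -/
def Delta1 (q : 𝒳 × 𝒴 → ℝ) (δ1 : 𝒳 → Xh → ℝ) {n m : ℕ}
    (f : (Fin n → 𝒳) × (Fin n → 𝒴) → Fin m)
    (g1 : Fin m × (Fin n → 𝒴) → Fin n → Xh) : ℝ :=
  ∑ xy : (Fin n → 𝒳) × (Fin n → 𝒴),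
    iid q n xy * ((n : ℝ)⁻¹ * ∑ i, δ1 (xy.1 i) (g1 (f xy, xy.2) i))

/-- Average distortion at receiver 2 of the RD code `(f, ·, g2)`. -/
def Delta2 (q : 𝒳 × 𝒴 → ℝ) (δ2 : 𝒴 → Yh → ℝ) {n m : ℕ}
    (f : (Fin n → 𝒳) × (Fin n → 𝒴) → Fin m)
    (g2 : Fin m × (Fin n → 𝒳) → Fin n → Yh) : ℝ :=
  ∑ xy : (Fin n → 𝒳) × (Fin n → 𝒴),
    iid q n xy * ((n : ℝ)⁻¹ * ∑ i, δ2 (xy.2 i) (g2 (f xy, xy.1) i))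

/-- `r` is a `(d1,d2)`-achievable rate (source coding). -/
def RDAchievable (q : 𝒳 × 𝒴 → ℝ) (δ1 : 𝒳 → Xh → ℝ) (δ2 : 𝒴 → Yh → ℝ)
    (d1 d2 r : ℝ) : Prop :=
  ∀ ε > (0 : ℝ), ∃ (n m : ℕ) (f : (Fin n → 𝒳) × (Fin n → 𝒴) → Fin m)
    (g1 : Fin m × (Fin n → 𝒴) → Fin n → Xh)
    (g2 : Fin m × (Fin n → 𝒳) → Fin n → Yh),
    0 < n ∧ Real.logb 2 m / n ≤ r + ε ∧
    Delta1 q δ1 f g1 ≤ d1 + ε ∧ Delta2 q δ2 f g2 ≤ d2 + ε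

/-- The rate-distortion function `R(d1,d2)`. -/
def RD (q : 𝒳 × 𝒴 → ℝ) (δ1 : 𝒳 → Xh → ℝ) (δ2 : 𝒴 → Yh → ℝ) (d1 d2 : ℝ) : ℝ :=
  sInf {r : ℝ | 0 ≤ r ∧ RDAchievable q δ1 δ2 d1 d2 r}

/-- `r` is `(d1,d2)`-achievable with common reconstructions. -/
def CRAchievable (q : 𝒳 × 𝒴 → ℝ) (δ1 : 𝒳 → Xh → ℝ) (δ2 : 𝒴 → Yh → ℝ)
    (d1 d2 r : ℝ) : Prop :=
  ∀ ε > (0 : ℝ), ∃ (n m : ℕ) (f : (Fin n → 𝒳) × (Fin n → 𝒴) → Fin m)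
    (g1 : Fin m × (Fin n → 𝒴) → Fin n → Xh)
    (g2 : Fin m × (Fin n → 𝒳) → Fin n → Yh)
    (φ1 : Fin m × (Fin n → 𝒴) → Fin n → Yh)
    (φ2 : Fin m × (Fin n → 𝒳) → Fin n → Xh),
    0 < n ∧ Real.logb 2 m / n ≤ r + ε ∧
    Delta1 q δ1 f g1 ≤ d1 + ε ∧ Delta2 q δ2 f g2 ≤ d2 + ε ∧
    (∑ xy : (Fin n → 𝒳) × (Fin n → 𝒴),
      if φ2 (f xy, xy.1) = g1 (f xy, xy.2) then 0 else iid q n xy) ≤ ε ∧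
    (∑ xy : (Fin n → 𝒳) × (Fin n → 𝒴),
      if φ1 (f xy, xy.2) = g2 (f xy, xy.1) then 0 else iid q n xy) ≤ ε

/-- The common-reconstruction rate-distortion function `R_CR(d1,d2)`. -/
def CRRD (q : 𝒳 × 𝒴 → ℝ) (δ1 : 𝒳 → Xh → ℝ) (δ2 : 𝒴 → Yh → ℝ) (d1 d2 : ℝ) : ℝ :=
  sInf {r : ℝ | 0 ≤ r ∧ CRAchievable q δ1 δ2 d1 d2 r}

/-- The conditional rate-distortion function `R_{X|Y}(d1)`. -/
def condRD (q : 𝒳 × 𝒴 → ℝ) (δ1 : 𝒳 → Xh → ℝ) (d1 : ℝ) : ℝ :=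
  sInf {r : ℝ | ∃ W : 𝒳 × 𝒴 → Xh → ℝ, IsCondPmf W ∧
    (∑ x, ∑ y, ∑ xh, q (x, y) * W (x, y) xh * δ1 x xh) ≤ d1 ∧
    r = condMI (fun t : 𝒳 × 𝒴 × Xh => q (t.1, t.2.1) * W (t.1, t.2.1) t.2.2)}

/-- Swap the two components of a joint source. -/
def swap (q : 𝒳 × 𝒴 → ℝ) : 𝒴 × 𝒳 → ℝ := fun t => q (t.2, t.1)

/-- The marginal rate-distortion function `R_X(d)`. -/
def margRD (qX : 𝒳 → ℝ) (δ1 : 𝒳 → Xh → ℝ) (d1 : ℝ) : ℝ :=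
  sInf {r : ℝ | ∃ W : 𝒳 → Xh → ℝ, IsCondPmf W ∧
    (∑ x, ∑ xh, qX x * W x xh * δ1 x xh) ≤ d1 ∧
    r = MI (fun t : 𝒳 × Xh => qX t.1 * W t.1 t.2)}

def margX (q : 𝒳 × 𝒴 → ℝ) : 𝒳 → ℝ := fun x => ∑ y, q (x, y)
def margY (q : 𝒳 × 𝒴 → ℝ) : 𝒴 → ℝ := fun y => ∑ x, q (x, y)

/-- The joint rate-distortion function `R_{XY}(d1,d2)`. -/
def jointRD (q : 𝒳 × 𝒴 → ℝ) (δ1 : 𝒳 → Xh → ℝ) (δ2 : 𝒴 → Yh → ℝ) (d1 d2 : ℝ) : ℝ :=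
  sInf {r : ℝ | ∃ W : 𝒳 × 𝒴 → Xh × Yh → ℝ, IsCondPmf W ∧
    (∑ xy : 𝒳 × 𝒴, ∑ z : Xh × Yh, q xy * W xy z * δ1 xy.1 z.1) ≤ d1 ∧
    (∑ xy : 𝒳 × 𝒴, ∑ z : Xh × Yh, q xy * W xy z * δ2 xy.2 z.2) ≤ d2 ∧
    r = MI (fun t : (𝒳 × 𝒴) × (Xh × Yh) => q t.1 * W t.1 t.2)}

/-- The Wyner–Ziv rate-distortion function `R^{WZ}_{X|Y}(d1)`
(with auxiliary alphabet of cardinality `|𝒳| + 1`). -/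
def wzRD (q : 𝒳 × 𝒴 → ℝ) (δ1 : 𝒳 → Xh → ℝ) (d1 : ℝ) : ℝ :=
  sInf {r : ℝ | ∃ p : Fin (Fintype.card 𝒳 + 1) × 𝒳 × 𝒴 → ℝ, IsPmf p ∧
    (∀ x y, (∑ a, p (a, x, y)) = q (x, y)) ∧ Markov p ∧
    (∃ π1 : Fin (Fintype.card 𝒳 + 1) × 𝒴 → Xh,
      (∑ a, ∑ x, ∑ y, p (a, x, y) * δ1 x (π1 (a, y))) ≤ d1) ∧
    r = condMI (fun t : 𝒳 × 𝒴 × Fin (Fintype.card 𝒳 + 1) => p (t.2.2, t.1, t.2.1))}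

/-- The set over which the single-letter CR formula
`max{I(X;X̂,Ŷ|Y), I(Y;X̂,Ŷ|X)}` is minimised. -/
def crFormulaSet (q : 𝒳 × 𝒴 → ℝ) (δ1 : 𝒳 → Xh → ℝ) (δ2 : 𝒴 → Yh → ℝ)
    (d1 d2 : ℝ) : Set ℝ :=
  {r : ℝ | ∃ W : 𝒳 × 𝒴 → Xh × Yh → ℝ, IsCondPmf W ∧
    (∑ x, ∑ y, ∑ z : Xh × Yh, q (x, y) * W (x, y) z * δ1 x z.1) ≤ d1 ∧
    (∑ x, ∑ y, ∑ z : Xh × Yh, q (x, y) * W (x, y) z * δ2 y z.2) ≤ d2 ∧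
    r = max
      (condMI (fun t : 𝒳 × 𝒴 × (Xh × Yh) => q (t.1, t.2.1) * W (t.1, t.2.1) t.2.2))
      (condMI (fun t : 𝒴 × 𝒳 × (Xh × Yh) => q (t.2.1, t.1) * W (t.2.1, t.1) t.2.2))}

/-- Joint law of source blocks and channel outputs for a JSC encoder. -/
def jscP (q : 𝒳 × 𝒴 → ℝ) (qUV : 𝒲 → 𝒰 × 𝒱 → ℝ) {n m : ℕ}
    (f : (Fin n → 𝒳) × (Fin n → 𝒴) → Fin m → 𝒲)
    (x : Fin n → 𝒳) (y : Fin n → 𝒴) (u : Fin m → 𝒰) (v : Fin m → 𝒱) : ℝ :=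
  (∏ i, q (x i, y i)) * ∏ j, qUV (f (x, y) j) (u j, v j)

/-- `(d1,d2)` is achievable by joint source-channel coding with source rate `κs`
and channel rate `κc` (bandwidth expansion `κc/κs`). -/
def JSCAchievable (q : 𝒳 × 𝒴 → ℝ) (qUV : 𝒲 → 𝒰 × 𝒱 → ℝ)
    (δ1 : 𝒳 → Xh → ℝ) (δ2 : 𝒴 → Yh → ℝ) (κs κc d1 d2 : ℝ) : Prop :=
  ∀ ε > (0 : ℝ), ∃ (t n m : ℕ) (f : (Fin n → 𝒳) × (Fin n → 𝒴) → Fin m → 𝒲)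
    (g1 : (Fin m → 𝒰) × (Fin n → 𝒴) → Fin n → Xh)
    (g2 : (Fin m → 𝒱) × (Fin n → 𝒳) → Fin n → Yh),
    0 < t ∧ (n : ℝ) = κs * t ∧ (m : ℝ) = κc * t ∧
    (∑ x : Fin n → 𝒳, ∑ y : Fin n → 𝒴, ∑ u : Fin m → 𝒰, ∑ v : Fin m → 𝒱,
      jscP q qUV f x y u v * ((n : ℝ)⁻¹ * ∑ i, δ1 (x i) (g1 (u, y) i))) ≤ d1 + ε ∧
    (∑ x : Fin n → 𝒳, ∑ y : Fin n → 𝒴, ∑ u : Fin m → 𝒰, ∑ v : Fin m → 𝒱,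
      jscP q qUV f x y u v * ((n : ℝ)⁻¹ * ∑ i, δ2 (y i) (g2 (v, x) i))) ≤ d2 + ε

/-- `(d1,d2)` is achievable by joint source-channel coding with common
reconstructions, source rate `κs` and channel rate `κc`. -/
def CRJSCAchievable (q : 𝒳 × 𝒴 → ℝ) (qUV : 𝒲 → 𝒰 × 𝒱 → ℝ)
    (δ1 : 𝒳 → Xh → ℝ) (δ2 : 𝒴 → Yh → ℝ) (κs κc d1 d2 : ℝ) : Prop :=
  ∀ ε > (0 : ℝ), ∃ (t n m : ℕ) (f : (Fin n → 𝒳) × (Fin n → 𝒴) → Fin m → 𝒲)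
    (g1 : (Fin m → 𝒰) × (Fin n → 𝒴) → Fin n → Xh)
    (g2 : (Fin m → 𝒱) × (Fin n → 𝒳) → Fin n → Yh)
    (φ1 : (Fin m → 𝒰) × (Fin n → 𝒴) → Fin n → Yh)
    (φ2 : (Fin m → 𝒱) × (Fin n → 𝒳) → Fin n → Xh),
    0 < t ∧ (n : ℝ) = κs * t ∧ (m : ℝ) = κc * t ∧
    (∑ x : Fin n → 𝒳, ∑ y : Fin n → 𝒴, ∑ u : Fin m → 𝒰, ∑ v : Fin m → 𝒱,
      jscP q qUV f x y u v * ((n : ℝ)⁻¹ * ∑ i, δ1 (x i) (g1 (u, y) i))) ≤ d1 + ε ∧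
    (∑ x : Fin n → 𝒳, ∑ y : Fin n → 𝒴, ∑ u : Fin m → 𝒰, ∑ v : Fin m → 𝒱,
      jscP q qUV f x y u v * ((n : ℝ)⁻¹ * ∑ i, δ2 (y i) (g2 (v, x) i))) ≤ d2 + ε ∧
    (∑ x : Fin n → 𝒳, ∑ y : Fin n → 𝒴, ∑ u : Fin m → 𝒰, ∑ v : Fin m → 𝒱,
      if φ2 (v, x) = g1 (u, y) then 0 else jscP q qUV f x y u v) ≤ ε ∧
    (∑ x : Fin n → 𝒳, ∑ y : Fin n → 𝒴, ∑ u : Fin m → 𝒰, ∑ v : Fin m → 𝒱,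
      if φ1 (u, y) = g2 (v, x) then 0 else jscP q qUV f x y u v) ≤ ε

/-- `I(W;U)` under the joint law `pW · qUV` (U-marginal of the broadcast channel). -/
def chMIU (qUV : 𝒲 → 𝒰 × 𝒱 → ℝ) (pW : 𝒲 → ℝ) : ℝ :=
  MI (fun t : 𝒲 × 𝒰 => pW t.1 * ∑ v, qUV t.1 (t.2, v))

/-- `I(W;V)` under the joint law `pW · qUV` (V-marginal of the broadcast channel). -/
def chMIV (qUV : 𝒲 → 𝒰 × 𝒱 → ℝ) (pW : 𝒲 → ℝ) : ℝ :=
  MI (fun t : 𝒲 × 𝒱 => pW t.1 * ∑ u, qUV t.1 (u, t.2))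

/-- The doubly symmetric binary source with crossover probability `ρ`. -/
def dsbs (ρ : ℝ) : Bool × Bool → ℝ :=
  fun t => if t.1 = t.2 then (1 - ρ) / 2 else ρ / 2

/-- The Hamming distortion measure. -/
def dHam {α : Type} : α → α → ℝ := fun a b => if a = b then 0 else 1

/-- The binary entropy function (base 2). -/
def binEnt (x : ℝ) : ℝ := -(x * Real.logb 2 x) - (1 - x) * Real.logb 2 (1 - x)

/-- A difference distortion measure built from a per-letter function of the
(modular) difference. -/
def diffD {l : ℕ} (δ : Fin l → ℝ) : Fin l → Fin l → ℝ := fun a b => δ (a - b)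

/-- Capacity of the modulo-additive channel with noise `pN` and input
distortion constraint `d`. -/
def Cadd {l : ℕ} (δ : Fin l → ℝ) (d : ℝ) (pN : Fin l → ℝ) : ℝ :=
  sSup {r : ℝ | ∃ pW : Fin l → ℝ, IsPmf pW ∧ (∑ w, pW w * δ w) ≤ d ∧
    r = MI (fun t : Fin l × Fin l => pW t.1 * pN (t.2 - t.1))}

/-- The minimax (worst-noise) capacity under distortion constraint `d`. -/
def Cworst {l : ℕ} (δ : Fin l → ℝ) (d : ℝ) : ℝ :=
  sInf {r : ℝ | ∃ pN : Fin l → ℝ, IsPmf pN ∧ (∑ x, pN x * δ x) ≤ d ∧ r = Cadd δ d pN}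

/-- Wyner's common information `K(X;Y)` (auxiliary alphabet of size 4). -/
def wynerK (q : 𝒳 × 𝒴 → ℝ) : ℝ :=
  sInf {r : ℝ | ∃ W : 𝒳 × 𝒴 → Fin 4 → ℝ, IsCondPmf W ∧
    Markov (fun t : 𝒳 × Fin 4 × 𝒴 => q (t.1, t.2.2) * W (t.1, t.2.2) t.2.1) ∧
    r = MI (fun t : (𝒳 × 𝒴) × Fin 4 => q t.1 * W t.1 t.2)}

/-- The one-description (Kimura–Uyematsu) upper bound `R_U*(d1,d2)`. -/
def oneDescUB (q : 𝒳 × 𝒴 → ℝ) (δ1 : 𝒳 → Xh → ℝ) (δ2 : 𝒴 → Yh → ℝ) (d1 d2 : ℝ) : ℝ :=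
  sInf {r : ℝ | ∃ W : 𝒳 × 𝒴 → Fin (Fintype.card 𝒳 * Fintype.card 𝒴 + 2) → ℝ,
    IsCondPmf W ∧
    (∃ π1 : Fin (Fintype.card 𝒳 * Fintype.card 𝒴 + 2) × 𝒴 → Xh,
      (∑ x, ∑ y, ∑ c, q (x, y) * W (x, y) c * δ1 x (π1 (c, y))) ≤ d1) ∧
    (∃ π2 : Fin (Fintype.card 𝒳 * Fintype.card 𝒴 + 2) × 𝒳 → Yh,
      (∑ x, ∑ y, ∑ c, q (x, y) * W (x, y) c * δ2 y (π2 (c, x))) ≤ d2) ∧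
    r = max
      (condMI (fun t : 𝒳 × 𝒴 × Fin (Fintype.card 𝒳 * Fintype.card 𝒴 + 2) =>
        q (t.1, t.2.1) * W (t.1, t.2.1) t.2.2))
      (condMI (fun t : 𝒴 × 𝒳 × Fin (Fintype.card 𝒳 * Fintype.card 𝒴 + 2) =>
        q (t.2.1, t.1) * W (t.2.1, t.1) t.2.2))}

end TWR

/-!
Receiver 2 can meet the maximal distortion by guessing, so only receiver 1 matters, and the claim
becomes the conditional rate-distortion theorem with side information `Y` at encoder and decoder.

*Converse.* For a code with `m` messages let `p` be the law of `(X, Y, X̂)` at a uniformly random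
time. Its `(X, Y)`-marginal is `q` and its mean distortion is that of the code. With `ı` the density
ratio `p(x, x̂ | y) / (p(x | y) p(x̂ | y))`, Jensen's inequality bounds `n I(X; X̂ | Y)` by
`log E[∏ᵢ ı(Xᵢ, Yᵢ, X̂ᵢ)]`. For a fixed message the reconstruction depends on `Y` only, and then
`E[∏ᵢ ı]` is at most `1`; summing over messages gives `log m`.

*Achievability.* Draw for each block `y` a codebook of `2 ^ (n (I + ε))` words from the conditional
law of `X̂` given `Y = y`. The encoder looks for a codeword jointly typical with the source.
Chernoff bounds make atypical blocks rare, and `(1 - u) ^ m ≤ exp (-m u)` makes it unlikely that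
the codebook misses all typical words.
-/

namespace TWR

open Filter Topology

section FiniteProbability

variable {ι α β γ : Type} [Fintype ι] [Fintype α] [Fintype β] [Fintype γ]

lemma IsPmf.nonempty {p : α → ℝ} (hp : IsPmf p) : Nonempty α := by
  by_contra h
  rw [not_nonempty_iff] at h
  simpa using hp.2

lemma IsPmf.sum_mul_le {p : α → ℝ} (hp : IsPmf p) {f : α → ℝ} {c : ℝ} (hf : ∀ a, f a ≤ c) :
    ∑ a, p a * f a ≤ c :=
  calc ∑ a, p a * f a ≤ ∑ a, p a * c :=
        Finset.sum_le_sum fun a _ => mul_le_mul_of_nonneg_left (hf a) (hp.1 a)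
    _ = c := by rw [← Finset.sum_mul, hp.2, one_mul]

lemma IsPmf.exists_le_sum_mul {p : α → ℝ} (hp : IsPmf p) (f : α → ℝ) :
    ∃ a, f a ≤ ∑ b, p b * f b := by
  have := hp.nonempty
  obtain ⟨a, ha⟩ := Finite.exists_min f
  refine ⟨a, ?_⟩
  calc f a = ∑ b, p b * f a := by rw [← Finset.sum_mul, hp.2, one_mul]
    _ ≤ ∑ b, p b * f b := Finset.sum_le_sum fun b _ => mul_le_mul_of_nonneg_left (ha b) (hp.1 b)

lemma IsPmf.pi [DecidableEq ι] {p : ι → α → ℝ} (hp : ∀ i, IsPmf (p i)) :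
    IsPmf fun a : ι → α => ∏ i, p i (a i) :=
  ⟨fun _ => Finset.prod_nonneg fun i _ => (hp i).1 _, by
    simp only [← Fintype.prod_sum, (hp _).2, Finset.prod_const_one]⟩

lemma IsPmf.sum_pi_mul_apply [DecidableEq ι] {p : α → ℝ} (hp : IsPmf p) (h : α → ℝ) (j : ι) :
    ∑ a : ι → α, (∏ i, p (a i)) * h (a j) = ∑ x, p x * h x := by
  calc ∑ a : ι → α, (∏ i, p (a i)) * h (a j)
      = ∑ a : ι → α, ∏ i, p (a i) * (if i = j then h (a i) else 1) := by
        simp only [Finset.prod_mul_distrib, Finset.prod_ite_eq', Finset.mem_univ, if_true]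
    _ = ∏ i, ∑ x, p x * (if i = j then h x else 1) :=
        (Fintype.prod_sum fun i x => p x * (if i = j then h x else 1)).symm
    _ = ∑ x, p x * h x := by
        rw [Finset.prod_eq_single j (fun i _ hi => by simp [hi, hp.2]) (by simp)]
        simp

lemma exists_isCondPmf_mul_eq {κ : Type} [Nonempty β] {q : κ → ℝ} {p : κ → β → ℝ}
    (hp : ∀ a b, 0 ≤ p a b) (hq : ∀ a, ∑ b, p a b = q a) :
    ∃ W : κ → β → ℝ, IsCondPmf W ∧ ∀ a b, q a * W a b = p a b := by
  have hrow (a : κ) : ∃ w : β → ℝ, IsPmf w ∧ ∀ b, q a * w b = p a b := by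
    obtain h | h := eq_or_ne (q a) 0
    · refine ⟨Pi.single (Classical.arbitrary β) 1, ⟨fun b => ?_, by simp⟩, fun b => ?_⟩
      · exact (Pi.single_nonneg.2 zero_le_one : (0 : β → ℝ) ≤ _) b
      · have := (Finset.sum_eq_zero_iff_of_nonneg fun b _ => hp a b).1 ((hq a).trans h) b
          (Finset.mem_univ b)
        rw [h, zero_mul, this]
    · have hqa : 0 ≤ q a := hq a ▸ Finset.sum_nonneg fun b _ => hp a b
      exact ⟨fun b => p a b / q a, ⟨fun b => div_nonneg (hp a b) hqa, by
        rw [← Finset.sum_div, hq, div_self h]⟩, fun b => mul_div_cancel₀ _ h⟩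
  choose W hW hWp using hrow
  exact ⟨W, hW, hWp⟩

lemma IsPmf.sum_mul_logb_le_logb {p : α → ℝ} (hp : IsPmf p) {f : α → ℝ} {m : ℝ} (hm : 0 < m)
    (hf : ∀ a, 0 < p a → 0 < f a) (hsum : ∑ a, p a * f a ≤ m) :
    ∑ a, p a * Real.logb 2 (f a) ≤ Real.logb 2 m := by
  have hterm (a : α) : p a * Real.log (f a) ≤ p a * Real.log m + (p a * f a / m - p a) := by
    rcases (hp.1 a).eq_or_lt with h | h
    · simp [← h]
    · have hlog := Real.log_le_sub_one_of_pos (div_pos (hf a h) hm)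
      rw [Real.log_div (hf a h).ne' hm.ne'] at hlog
      linear_combination mul_le_mul_of_nonneg_left hlog h.le
  have hlog : ∑ a, p a * Real.log (f a) ≤ Real.log m :=
    calc ∑ a, p a * Real.log (f a)
        ≤ ∑ a, (p a * Real.log m + (p a * f a / m - p a)) := Finset.sum_le_sum fun a _ => hterm a
      _ = Real.log m + ((∑ a, p a * f a) / m - 1) := by
          rw [Finset.sum_add_distrib, Finset.sum_sub_distrib, ← Finset.sum_mul, hp.2,
            ← Finset.sum_div, one_mul]
      _ ≤ Real.log m := by linarith [(div_le_one hm).2 hsum]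
  simp only [Real.logb, ← mul_div_assoc, ← Finset.sum_div]
  exact div_le_div_of_nonneg_right hlog (Real.log_nonneg one_le_two)

/-- The moment generating function of `f` has the negative derivative `E[f]` at `0`. -/
lemma IsPmf.exists_pos_sum_mul_exp_lt_one {p : α → ℝ} (hp : IsPmf p) {f : α → ℝ}
    (hf : ∑ a, p a * f a < 0) : ∃ s > 0, ∑ a, p a * Real.exp (s * f a) < 1 := by
  have hderiv : HasDerivAt (fun s => ∑ a, p a * Real.exp (s * f a)) (∑ a, p a * f a) 0 := by
    have := HasDerivAt.fun_sum (u := Finset.univ) fun a _ =>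
      (((hasDerivAt_id (0 : ℝ)).mul_const (f a)).exp).const_mul (p a)
    simpa using this
  have hslope := hderiv.tendsto_slope_zero_right.eventually (gt_mem_nhds hf)
  obtain ⟨s, hslope, hs⟩ := (hslope.and self_mem_nhdsWithin).exists
  refine ⟨s, hs, ?_⟩
  have hdiff := neg_of_mul_neg_right hslope (inv_nonneg.2 (le_of_lt hs))
  simpa [hp.2] using hdiff

lemma IsPmf.sum_pos_tail_le_pow {p : α → ℝ} (hp : IsPmf p) (f : α → ℝ) {s : ℝ} (hs : 0 ≤ s)
    (n : ℕ) :
    ∑ a : Fin n → α with 0 < ∑ i, f (a i), ∏ i, p (a i) ≤ (∑ a, p a * Real.exp (s * f a)) ^ n :=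
  have hprod (a : Fin n → α) : 0 ≤ ∏ i, p (a i) := Finset.prod_nonneg fun i _ => hp.1 _
  calc ∑ a : Fin n → α with 0 < ∑ i, f (a i), ∏ i, p (a i)
      ≤ ∑ a : Fin n → α with 0 < ∑ i, f (a i), (∏ i, p (a i)) * Real.exp (s * ∑ i, f (a i)) :=
        Finset.sum_le_sum fun a ha => le_mul_of_one_le_right (hprod a)
          (Real.one_le_exp (mul_nonneg hs (Finset.mem_filter.1 ha).2.le))
    _ ≤ ∑ a : Fin n → α, (∏ i, p (a i)) * Real.exp (s * ∑ i, f (a i)) :=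
        Finset.sum_le_univ_sum_of_nonneg fun a => mul_nonneg (hprod a) (Real.exp_pos _).le
    _ = (∑ a, p a * Real.exp (s * f a)) ^ n := by
        simp only [Fintype.sum_pow, Finset.prod_mul_distrib, Finset.mul_sum, Real.exp_sum]

lemma IsPmf.tendsto_upper_tail {p : α → ℝ} (hp : IsPmf p) {f : α → ℝ} {c : ℝ}
    (hf : ∑ a, p a * f a < c) :
    Tendsto (fun n : ℕ => ∑ a : Fin n → α with n * c < ∑ i, f (a i), ∏ i, p (a i))
      atTop (𝓝 0) := by
  have hmean : ∑ a, p a * (f a - c) < 0 := by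
    simpa [mul_sub, Finset.sum_sub_distrib, ← Finset.sum_mul, hp.2] using hf
  obtain ⟨s, hs, hlt⟩ := hp.exists_pos_sum_mul_exp_lt_one hmean
  refine squeeze_zero (fun n => Finset.sum_nonneg fun a _ => Finset.prod_nonneg fun i _ => hp.1 _)
    (fun n => ?_) (tendsto_pow_atTop_nhds_zero_of_lt_one (Finset.sum_nonneg fun a _ =>
      mul_nonneg (hp.1 a) (Real.exp_pos _).le) hlt)
  simpa [Finset.sum_sub_distrib] using hp.sum_pos_tail_le_pow (fun a => f a - c) hs.le n

lemma sum_pair_comp_eq {n : ℕ} (h : (Fin n → α × β) → ℝ) :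
    ∑ xy : (Fin n → α) × (Fin n → β), h (fun i => (xy.1 i, xy.2 i)) = ∑ a, h a :=
  (Equiv.arrowProdEquivProdArrow (Fin n) (fun _ => α) (fun _ => β)).symm.sum_comp h

lemma sum_triple_comp_eq {n : ℕ} (h : (Fin n → α × β × γ) → ℝ) :
    ∑ xy : (Fin n → α) × (Fin n → β), ∑ z : Fin n → γ, h (fun i => (xy.1 i, xy.2 i, z i))
      = ∑ a, h a := by
  rw [← sum_pair_comp_eq h, Fintype.sum_prod_type, Fintype.sum_prod_type]
  refine Finset.sum_congr rfl fun x _ => ?_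
  rw [← sum_pair_comp_eq fun a : Fin n → β × γ => h fun i => (x i, a i), Fintype.sum_prod_type]

lemma IsPmf.iid {q : α × β → ℝ} (hq : IsPmf q) (n : ℕ) : IsPmf (iid q n) :=
  ⟨fun _ => Finset.prod_nonneg fun _ _ => hq.1 _,
    (sum_pair_comp_eq fun a : Fin n → α × β => ∏ i, q (a i)).trans (IsPmf.pi fun _ => hq).2⟩

lemma IsPmf.sum_iid_mul_average {q : α × β → ℝ} (hq : IsPmf q) {n : ℕ} (hn : 0 < n)
    (h : α × β → ℝ) :
    ∑ xy, TWR.iid q n xy * ((n : ℝ)⁻¹ * ∑ i, h (xy.1 i, xy.2 i)) = ∑ t, q t * h t := by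
  have hn : (n : ℝ) ≠ 0 := by exact_mod_cast hn.ne'
  calc ∑ xy, TWR.iid q n xy * ((n : ℝ)⁻¹ * ∑ i, h (xy.1 i, xy.2 i))
      = ∑ a : Fin n → α × β, (∏ i, q (a i)) * ((n : ℝ)⁻¹ * ∑ i, h (a i)) :=
        sum_pair_comp_eq fun a : Fin n → α × β => (∏ i, q (a i)) * ((n : ℝ)⁻¹ * ∑ i, h (a i))
    _ = (n : ℝ)⁻¹ * ∑ i, ∑ a : Fin n → α × β, (∏ i, q (a i)) * h (a i) := by
        rw [Finset.sum_comm, Finset.mul_sum]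
        exact Finset.sum_congr rfl fun a _ => by rw [← Finset.mul_sum]; ring
    _ = ∑ t, q t * h t := by
        simp [hq.sum_pi_mul_apply, hn]

end FiniteProbability

section ConditionalMutualInformation

variable {α β γ : Type}

/-- The joint law on `α × β × γ` of a source `q` on `α × β` and the output of the channel `W`. -/
def jointLaw (q : α × β → ℝ) (W : α × β → γ → ℝ) : α × β × γ → ℝ :=
  fun t => q (t.1, t.2.1) * W (t.1, t.2.1) t.2.2

lemma continuous_jointLaw (q : α × β → ℝ) :
    Continuous (jointLaw q : (α × β → γ → ℝ) → α × β × γ → ℝ) := by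
  unfold jointLaw
  fun_prop

variable [Fintype γ]

lemma IsCondPmf.sum_jointLaw {W : α × β → γ → ℝ} (hW : IsCondPmf W) (q : α × β → ℝ) (a : α)
    (b : β) : ∑ c, jointLaw q W (a, b, c) = q (a, b) := by
  simp only [jointLaw, ← Finset.mul_sum, (hW _).2, mul_one]

variable [Fintype α]

/-- The information density ratio `p(a, c | b) / (p(a | b) p(c | b))`: the expectation of its
binary logarithm is `I(A;C|B)`. It is `0` wherever `p` vanishes. -/
def condDensityRatio (p : α × β × γ → ℝ) (t : α × β × γ) : ℝ :=
  p t * (∑ a, ∑ c, p (a, t.2.1, c)) / ((∑ c, p (t.1, t.2.1, c)) * ∑ a, p (a, t.2.1, t.2.2))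

lemma marginals_pos {p : α × β × γ → ℝ} (hp : ∀ t, 0 ≤ p t) {t : α × β × γ} (ht : 0 < p t) :
    0 < ∑ a, ∑ c, p (a, t.2.1, c) ∧ 0 < ∑ c, p (t.1, t.2.1, c) ∧ 0 < ∑ a, p (a, t.2.1, t.2.2) := by
  have hac : 0 < ∑ c, p (t.1, t.2.1, c) :=
    Finset.sum_pos' (fun c _ => hp _) ⟨t.2.2, Finset.mem_univ _, ht⟩
  exact ⟨Finset.sum_pos' (fun a _ => Finset.sum_nonneg fun c _ => hp _)
      ⟨t.1, Finset.mem_univ _, hac⟩, hac,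
    Finset.sum_pos' (fun a _ => hp _) ⟨t.1, Finset.mem_univ _, ht⟩⟩

lemma condDensityRatio_nonneg {p : α × β × γ → ℝ} (hp : ∀ t, 0 ≤ p t) (t : α × β × γ) :
    0 ≤ condDensityRatio p t :=
  div_nonneg (mul_nonneg (hp t) (Finset.sum_nonneg fun _ _ => Finset.sum_nonneg fun _ _ => hp _))
    (mul_nonneg (Finset.sum_nonneg fun _ _ => hp _) (Finset.sum_nonneg fun _ _ => hp _))

lemma condDensityRatio_pos {p : α × β × γ → ℝ} (hp : ∀ t, 0 ≤ p t) {t : α × β × γ}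
    (ht : 0 < p t) : 0 < condDensityRatio p t := by
  obtain ⟨hb, hab, hbc⟩ := marginals_pos hp ht
  exact div_pos (mul_pos ht hb) (mul_pos hab hbc)

lemma sum_marginal_mul_condDensityRatio_le {p : α × β × γ → ℝ} (hp : ∀ t, 0 ≤ p t) (b : β) (c : γ) :
    ∑ a, (∑ c', p (a, b, c')) * condDensityRatio p (a, b, c) ≤ ∑ a, ∑ c', p (a, b, c') := by
  have hb : 0 ≤ ∑ a, ∑ c', p (a, b, c') :=
    Finset.sum_nonneg fun _ _ => Finset.sum_nonneg fun _ _ => hp _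
  have hterm (a : α) : (∑ c', p (a, b, c')) * condDensityRatio p (a, b, c)
      ≤ (∑ a, ∑ c', p (a, b, c')) * (p (a, b, c) / ∑ a, p (a, b, c)) := by
    obtain hab | hab := eq_or_ne (∑ c', p (a, b, c')) 0
    · rw [hab, zero_mul]
      exact mul_nonneg hb (div_nonneg (hp _) (Finset.sum_nonneg fun _ _ => hp _))
    · rw [condDensityRatio, mul_div_assoc', mul_div_mul_left _ _ hab, mul_comm (p _),
        mul_div_assoc]
  calc ∑ a, (∑ c', p (a, b, c')) * condDensityRatio p (a, b, c)
      ≤ ∑ a, (∑ a, ∑ c', p (a, b, c')) * (p (a, b, c) / ∑ a, p (a, b, c)) :=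
        Finset.sum_le_sum fun a _ => hterm a
    _ = (∑ a, ∑ c', p (a, b, c')) * ((∑ a, p (a, b, c)) / ∑ a, p (a, b, c)) := by
        rw [← Finset.mul_sum, ← Finset.sum_div]
    _ ≤ ∑ a, ∑ c', p (a, b, c') := mul_le_of_le_one_right hb (div_self_le_one _)

variable [Fintype β]

lemma IsPmf.jointLaw {q : α × β → ℝ} (hq : IsPmf q) {W : α × β → γ → ℝ} (hW : IsCondPmf W) :
    IsPmf (jointLaw q W) :=
  ⟨fun _ => mul_nonneg (hq.1 _) ((hW _).1 _), by
    simp only [← hq.2, Fintype.sum_prod_type, hW.sum_jointLaw]⟩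

/-- Bayes' rule, with `Q` the conditional law of `C` given `B`. -/
lemma eq_condDensityRatio_mul {q : α × β → ℝ} (hq : IsPmf q) {W : α × β → γ → ℝ}
    (hW : IsCondPmf W) {Q : β → γ → ℝ}
    (hQ : ∀ b c, (∑ a, q (a, b)) * Q b c = ∑ a, jointLaw q W (a, b, c)) {a : α} {b : β}
    (hab : 0 < q (a, b)) (c : γ) :
    W (a, b) c = condDensityRatio (jointLaw q W) (a, b, c) * Q b c := by
  rcases ((hW (a, b)).1 c).eq_or_lt with hWc | hWc
  · simp [condDensityRatio, jointLaw, ← hWc]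
  obtain ⟨-, -, hbc⟩ := marginals_pos (hq.jointLaw hW).1 (t := (a, b, c)) (mul_pos hab hWc)
  rw [← hQ b c] at hbc
  have hb : ∑ a, q (a, b) ≠ 0 := left_ne_zero_of_mul hbc.ne'
  have hQc : Q b c ≠ 0 := right_ne_zero_of_mul hbc.ne'
  simp only [condDensityRatio, hW.sum_jointLaw, ← hQ b c]
  simp only [jointLaw]
  field_simp

lemma condMI_eq_sum_mul_logb {p : α × β × γ → ℝ} (hp : ∀ t, 0 ≤ p t) :
    condMI p = ∑ t, p t * Real.logb 2 (condDensityRatio p t) := by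
  have hterm (t : α × β × γ) : p t * Real.logb 2 (condDensityRatio p t)
      = p t * Real.logb 2 (p t) + p t * Real.logb 2 (∑ a, ∑ c, p (a, t.2.1, c))
        - p t * Real.logb 2 (∑ c, p (t.1, t.2.1, c))
        - p t * Real.logb 2 (∑ a, p (a, t.2.1, t.2.2)) := by
    rcases (hp t).eq_or_lt with ht | ht
    · simp [← ht]
    obtain ⟨hb, hab, hbc⟩ := marginals_pos hp ht
    rw [condDensityRatio, Real.logb_div (by positivity) (by positivity),
      Real.logb_mul ht.ne' hb.ne', Real.logb_mul hab.ne' hbc.ne']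
    ring
  have hb : ∑ t, p t * Real.logb 2 (∑ a, ∑ c, p (a, t.2.1, c))
      = ∑ b, (∑ a, ∑ c, p (a, b, c)) * Real.logb 2 (∑ a, ∑ c, p (a, b, c)) := by
    simp only [Fintype.sum_prod_type, Finset.sum_mul]
    exact Finset.sum_comm
  have hab : ∑ t, p t * Real.logb 2 (∑ c, p (t.1, t.2.1, c))
      = ∑ ab : α × β, (∑ c, p (ab.1, ab.2, c)) * Real.logb 2 (∑ c, p (ab.1, ab.2, c)) := by
    simp only [Fintype.sum_prod_type, Finset.sum_mul]
  have hbc : ∑ t, p t * Real.logb 2 (∑ a, p (a, t.2.1, t.2.2))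
      = ∑ bc : β × γ, (∑ a, p (a, bc.1, bc.2)) * Real.logb 2 (∑ a, p (a, bc.1, bc.2)) := by
    simp only [Finset.sum_mul]
    rw [Fintype.sum_prod_type, Finset.sum_comm]
  simp only [hterm, Finset.sum_sub_distrib, Finset.sum_add_distrib, condMI, H2, hb, hab, hbc]
  ring

lemma IsPmf.condMI_nonneg {p : α × β × γ → ℝ} (hp : IsPmf p) : 0 ≤ condMI p := by
  have hterm (t : α × β × γ) : p t * (condDensityRatio p t)⁻¹
      ≤ (∑ c, p (t.1, t.2.1, c)) * (∑ a, p (a, t.2.1, t.2.2)) / ∑ a, ∑ c, p (a, t.2.1, c) := by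
    rcases (hp.1 t).eq_or_lt with ht | ht
    · rw [← ht, zero_mul]
      exact div_nonneg (mul_nonneg (Finset.sum_nonneg fun _ _ => hp.1 _)
        (Finset.sum_nonneg fun _ _ => hp.1 _))
        (Finset.sum_nonneg fun _ _ => Finset.sum_nonneg fun _ _ => hp.1 _)
    · rw [condDensityRatio, inv_div, mul_div_assoc', mul_div_mul_left _ _ ht.ne']
  have hsum : ∑ t, p t * (condDensityRatio p t)⁻¹ ≤ 1 :=
    calc ∑ t, p t * (condDensityRatio p t)⁻¹
        ≤ ∑ t : α × β × γ, (∑ c, p (t.1, t.2.1, c)) * (∑ a, p (a, t.2.1, t.2.2)) /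
            ∑ a, ∑ c, p (a, t.2.1, c) := Finset.sum_le_sum fun t _ => hterm t
      _ = ∑ b, (∑ a, ∑ c, p (a, b, c)) * (∑ c, ∑ a, p (a, b, c)) / ∑ a, ∑ c, p (a, b, c) := by
          simp only [Fintype.sum_prod_type, Finset.sum_mul_sum, Finset.sum_div]
          exact Finset.sum_comm
      _ = ∑ b, ∑ a, ∑ c, p (a, b, c) := Finset.sum_congr rfl fun b _ => by
          rw [Finset.sum_comm (f := fun c a => p (a, b, c)), mul_self_div_self]
      _ = 1 := by
          rw [Finset.sum_comm, ← hp.2]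
          simp only [Fintype.sum_prod_type]
  have hlog := hp.sum_mul_logb_le_logb one_pos
    (fun t ht => inv_pos.2 (condDensityRatio_pos hp.1 ht)) hsum
  simpa only [condMI_eq_sum_mul_logb hp.1, Real.logb_inv, mul_neg, Finset.sum_neg_distrib,
    Real.logb_one, neg_nonpos] using hlog

lemma continuous_H2 : Continuous (H2 : (α → ℝ) → ℝ) := by
  have hlog : Continuous fun x : ℝ => x * Real.logb 2 x := by
    simp only [Real.logb, ← mul_div_assoc]
    exact Real.continuous_mul_log.div_const _
  exact (continuous_finsetSum _ fun a _ => hlog.comp (continuous_apply a)).neg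

lemma continuous_condMI : Continuous (condMI : (α × β × γ → ℝ) → ℝ) := by
  unfold condMI
  refine ((Continuous.add ?_ ?_).sub ?_).sub ?_ <;> exact continuous_H2.comp (by fun_prop)

/-- The test channels `p(c | a, b)` with mean distortion between `a` and `c` at most `d`. -/
def testChannels (q : α × β → ℝ) (δ : α → γ → ℝ) (d : ℝ) : Set (α × β → γ → ℝ) :=
  {W | IsCondPmf W ∧ ∑ t, jointLaw q W t * δ t.1 t.2.2 ≤ d}

end ConditionalMutualInformation

section Converse

section AveragedLaw

variable {Ω τ : Type} [Fintype Ω] {n : ℕ}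

/-- The average over `i` of the laws of the random letters `s · i` under `P`, that is, the law of
the letter at a uniformly random time. -/
def averagedLaw (P : Ω → ℝ) (s : Ω → Fin n → τ) (t : τ) : ℝ :=
  ∑ ω, P ω * ((n : ℝ)⁻¹ * ∑ i, if s ω i = t then 1 else 0)

lemma averagedLaw_nonneg {P : Ω → ℝ} (hP : ∀ ω, 0 ≤ P ω) (s : Ω → Fin n → τ) (t : τ) :
    0 ≤ averagedLaw P s t :=
  Finset.sum_nonneg fun ω _ => mul_nonneg (hP ω) (by positivity)

lemma averagedLaw_pos {P : Ω → ℝ} (hP : ∀ ω, 0 ≤ P ω) (s : Ω → Fin n → τ) {ω : Ω} (hω : 0 < P ω)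
    (i : Fin n) : 0 < averagedLaw P s (s ω i) := by
  have hn : (0 : ℝ) < n := by exact_mod_cast i.pos
  have hcount : (0 : ℝ) < ∑ j, if s ω j = s ω i then 1 else 0 :=
    Finset.sum_pos' (fun j _ => by positivity) ⟨i, Finset.mem_univ _, by simp⟩
  exact Finset.sum_pos' (fun ω _ => mul_nonneg (hP ω) (by positivity))
    ⟨ω, Finset.mem_univ _, by positivity⟩

lemma sum_averagedLaw_mul [Fintype τ] (P : Ω → ℝ) (s : Ω → Fin n → τ) (h : τ → ℝ) :
    ∑ t, averagedLaw P s t * h t = ∑ ω, P ω * ((n : ℝ)⁻¹ * ∑ i, h (s ω i)) := by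
  simp only [averagedLaw, Finset.sum_mul]
  rw [Finset.sum_comm]
  refine Finset.sum_congr rfl fun ω _ => ?_
  simp only [mul_assoc, ← Finset.mul_sum, Finset.sum_mul]
  rw [Finset.sum_comm]
  simp

end AveragedLaw

variable {𝒳 𝒴 Xh Yh : Type} [Fintype 𝒳] [Fintype 𝒴] [Fintype Xh]
variable {q : 𝒳 × 𝒴 → ℝ} {n m : ℕ}

/-- The law of source letters and reconstruction at receiver 1 at a uniformly random time, when
the code `(f, g1, ·)` is used. -/
def codeLaw (q : 𝒳 × 𝒴 → ℝ) (f : (Fin n → 𝒳) × (Fin n → 𝒴) → Fin m)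
    (g1 : Fin m × (Fin n → 𝒴) → Fin n → Xh) : 𝒳 × 𝒴 × Xh → ℝ :=
  averagedLaw (iid q n) fun xy i => (xy.1 i, xy.2 i, g1 (f xy, xy.2) i)

lemma sum_codeLaw (hq : IsPmf q) (hn : 0 < n) (f : (Fin n → 𝒳) × (Fin n → 𝒴) → Fin m)
    (g1 : Fin m × (Fin n → 𝒴) → Fin n → Xh) (x : 𝒳) (y : 𝒴) :
    ∑ z, codeLaw q f g1 (x, y, z) = q (x, y) := by
  let ind : 𝒳 × 𝒴 → ℝ := fun xy => if xy = (x, y) then 1 else 0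
  calc ∑ z, codeLaw q f g1 (x, y, z)
      = ∑ xy : 𝒳 × 𝒴, (∑ z, codeLaw q f g1 (xy.1, xy.2, z)) * ind xy := by simp [ind]
    _ = ∑ t, codeLaw q f g1 t * ind (t.1, t.2.1) := by
        simp only [Fintype.sum_prod_type, Finset.sum_mul]
    _ = ∑ xy, iid q n xy * ((n : ℝ)⁻¹ * ∑ i, ind (xy.1 i, xy.2 i)) :=
        sum_averagedLaw_mul _ _ _
    _ = ∑ xy, q xy * ind xy := hq.sum_iid_mul_average hn ind
    _ = q (x, y) := by simp [ind]

lemma sum_iid_mul_prod_condDensityRatio_le (hq : IsPmf q) {p : 𝒳 × 𝒴 × Xh → ℝ}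
    (hp : ∀ t, 0 ≤ p t) (hpq : ∀ x y, ∑ z, p (x, y, z) = q (x, y))
    (f : (Fin n → 𝒳) × (Fin n → 𝒴) → Fin m) (g1 : Fin m × (Fin n → 𝒴) → Fin n → Xh) :
    ∑ xy, iid q n xy * ∏ i, condDensityRatio p (xy.1 i, xy.2 i, g1 (f xy, xy.2) i) ≤ m := by
  let w (k : Fin m) (y : Fin n → 𝒴) (i : Fin n) (x : 𝒳) : ℝ :=
    q (x, y i) * condDensityRatio p (x, y i, g1 (k, y) i)
  have hw (k y i x) : 0 ≤ w k y i x := mul_nonneg (hq.1 _) (condDensityRatio_nonneg hp _)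
  have hsum (k y i) : ∑ x, w k y i x ≤ ∑ x, q (x, y i) := by
    simpa only [hpq] using sum_marginal_mul_condDensityRatio_le hp (y i) (g1 (k, y) i)
  have hY : IsPmf fun y => ∑ x, q (x, y) :=
    ⟨fun y => Finset.sum_nonneg fun x _ => hq.1 _, by rw [← hq.2, Fintype.sum_prod_type_right]⟩
  calc ∑ xy, iid q n xy * ∏ i, condDensityRatio p (xy.1 i, xy.2 i, g1 (f xy, xy.2) i)
      = ∑ xy : (Fin n → 𝒳) × (Fin n → 𝒴), ∏ i, w (f xy) xy.2 i (xy.1 i) := by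
        simp only [iid, w, Finset.prod_mul_distrib]
    _ ≤ ∑ xy : (Fin n → 𝒳) × (Fin n → 𝒴), ∑ k, ∏ i, w k xy.2 i (xy.1 i) :=
        Finset.sum_le_sum fun xy _ => Finset.single_le_sum
          (f := fun k => ∏ i, w k xy.2 i (xy.1 i))
          (fun k _ => Finset.prod_nonneg fun i _ => hw _ _ _ _) (Finset.mem_univ (f xy))
    _ = ∑ k, ∑ y, ∏ i, ∑ x, w k y i x := by
        rw [Finset.sum_comm]
        simp only [Fintype.sum_prod_type_right, Fintype.prod_sum]
    _ ≤ ∑ _k : Fin m, ∑ y : Fin n → 𝒴, ∏ i, ∑ x, q (x, y i) := by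
        exact Finset.sum_le_sum fun k _ => Finset.sum_le_sum fun y _ => Finset.prod_le_prod
          (fun i _ => Finset.sum_nonneg fun x _ => hw k y i x) fun i _ => hsum k y i
    _ = m := by simp [(IsPmf.pi fun _ : Fin n => hY).2]

/-- Jensen's inequality moves the expectation inside the logarithm of the density ratio. -/
lemma condMI_codeLaw_le (hq : IsPmf q) (hn : 0 < n) (f : (Fin n → 𝒳) × (Fin n → 𝒴) → Fin m)
    (g1 : Fin m × (Fin n → 𝒴) → Fin n → Xh) :
    condMI (codeLaw q f g1) ≤ Real.logb 2 m / n := by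
  have hP := hq.iid n
  let s (xy : (Fin n → 𝒳) × (Fin n → 𝒴)) (i : Fin n) : 𝒳 × 𝒴 × Xh :=
    (xy.1 i, xy.2 i, g1 (f xy, xy.2) i)
  have hp : ∀ t, 0 ≤ codeLaw q f g1 t := averagedLaw_nonneg hP.1 s
  have hratio (xy) (hxy : 0 < iid q n xy) (i) : 0 < condDensityRatio (codeLaw q f g1) (s xy i) :=
    condDensityRatio_pos hp (averagedLaw_pos hP.1 s hxy i)
  have hm : (0 : ℝ) < m := by
    obtain ⟨xy⟩ := hP.nonempty
    exact_mod_cast (f xy).pos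
  calc condMI (codeLaw q f g1)
      = ∑ xy, iid q n xy *
          ((n : ℝ)⁻¹ * ∑ i, Real.logb 2 (condDensityRatio (codeLaw q f g1) (s xy i))) :=
        (condMI_eq_sum_mul_logb hp).trans (sum_averagedLaw_mul _ s _)
    _ = (∑ xy, iid q n xy *
          Real.logb 2 (∏ i, condDensityRatio (codeLaw q f g1) (s xy i))) / n := by
        rw [Finset.sum_div]
        refine Finset.sum_congr rfl fun xy _ => ?_
        rcases (hP.1 xy).eq_or_lt with hxy | hxy
        · simp [← hxy]
        · rw [Real.logb_prod _ _ fun i _ => (hratio xy hxy i).ne']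
          ring
    _ ≤ Real.logb 2 m / n := by
        gcongr
        exact hP.sum_mul_logb_le_logb hm
          (fun xy hxy => Finset.prod_pos fun i _ => hratio xy hxy i)
          (sum_iid_mul_prod_condDensityRatio_le hq hp (sum_codeLaw hq hn f g1) f g1)

lemma exists_mem_testChannels_of_code (hq : IsPmf q) (hn : 0 < n) (δ : 𝒳 → Xh → ℝ)
    (f : (Fin n → 𝒳) × (Fin n → 𝒴) → Fin m) (g1 : Fin m × (Fin n → 𝒴) → Fin n → Xh) :
    ∃ W ∈ testChannels q δ (Delta1 q δ f g1), condMI (jointLaw q W) ≤ Real.logb 2 m / n := by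
  obtain ⟨xy⟩ := (hq.iid n).nonempty
  have : Nonempty Xh := ⟨g1 (f xy, xy.2) ⟨0, hn⟩⟩
  obtain ⟨W, hW, hWp⟩ := exists_isCondPmf_mul_eq
    (q := q) (p := fun xy z => codeLaw q f g1 (xy.1, xy.2, z))
    (fun _ _ => averagedLaw_nonneg (hq.iid n).1 _ _) fun xy => sum_codeLaw hq hn f g1 xy.1 xy.2
  have hlaw : jointLaw q W = codeLaw q f g1 := funext fun t => hWp (t.1, t.2.1) t.2.2
  refine ⟨W, ⟨hW, ?_⟩, ?_⟩
  · rw [hlaw]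
    exact (sum_averagedLaw_mul _ _ _).le
  · rw [hlaw]
    exact condMI_codeLaw_le hq hn f g1

/-- Compactness of the set of channels removes the slack `ε` of achievability. -/
lemma exists_mem_testChannels_of_rdAchievable (hq : IsPmf q) {δ1 : 𝒳 → Xh → ℝ} {δ2 : 𝒴 → Yh → ℝ}
    {d1 d2 r : ℝ} (h : RDAchievable q δ1 δ2 d1 d2 r) :
    ∃ W ∈ testChannels q δ1 d1, condMI (jointLaw q W) ≤ r := by
  let excess (W : 𝒳 × 𝒴 → Xh → ℝ) : ℝ :=
    max (∑ t, jointLaw q W t * δ1 t.1 t.2.2 - d1) (condMI (jointLaw q W) - r)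
  let channels : Set (𝒳 × 𝒴 → Xh → ℝ) := Set.univ.pi fun _ => stdSimplex ℝ Xh
  have happrox (ε : ℝ) (hε : 0 < ε) : ∃ W ∈ channels, excess W ≤ ε := by
    obtain ⟨n, m, f, g1, g2, hn, hrate, hdist, -⟩ := h ε hε
    obtain ⟨W, ⟨hW, hWd⟩, hWr⟩ := exists_mem_testChannels_of_code hq hn δ1 f g1
    exact ⟨W, fun a _ => hW a, max_le (by linarith) (by linarith)⟩
  have hcont : Continuous excess := by
    have hlaw := continuous_jointLaw (γ := Xh) q
    refine Continuous.max (Continuous.sub ?_ continuous_const)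
      ((continuous_condMI.comp hlaw).sub continuous_const)
    exact continuous_finsetSum _ fun t _ => ((continuous_apply t).comp hlaw).mul continuous_const
  obtain ⟨W₁, hW₁, -⟩ := happrox 1 one_pos
  obtain ⟨W, hW, hmin⟩ := (isCompact_univ_pi fun _ => isCompact_stdSimplex ℝ Xh).exists_isMinOn
    ⟨W₁, hW₁⟩ hcont.continuousOn
  have hexcess : excess W ≤ 0 := le_of_forall_pos_le_add fun ε hε => by
    obtain ⟨V, hV, hVε⟩ := happrox ε hε
    linarith [isMinOn_iff.1 hmin V hV]
  obtain ⟨hdist, hrate⟩ := max_le_iff.1 hexcess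
  exact ⟨W, ⟨fun a => hW a (Set.mem_univ a), sub_nonpos.1 hdist⟩, sub_nonpos.1 hrate⟩

end Converse

section Achievability

section Covering

variable {S T Z : Type} [Fintype S] [Fintype T] [Fintype Z]

/-- Draw the codewords independently from `Q`. -/
lemma exists_codebook {Q : Z → ℝ} (hQ : IsPmf Q) (P : S → ℝ) (G : S → Z → Prop) (m : ℕ) :
    ∃ c : Fin m → Z, ∑ s with ∀ k, ¬G s (c k), P s ≤ ∑ s, P s * (∑ z with ¬G s z, Q z) ^ m := by
  obtain ⟨c, hc⟩ := (IsPmf.pi fun _ : Fin m => hQ).exists_le_sum_mul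
    fun c => ∑ s with ∀ k, ¬G s (c k), P s
  refine ⟨c, hc.trans_eq ?_⟩
  simp only [Finset.sum_filter, Finset.mul_sum]
  rw [Finset.sum_comm]
  refine Finset.sum_congr rfl fun s _ => ?_
  rw [Fintype.sum_pow, Finset.mul_sum]
  refine Finset.sum_congr rfl fun c _ => ?_
  rw [Fintype.prod_ite_zero, mul_ite, mul_ite, mul_zero, mul_zero, mul_comm]
  congr

lemma pow_sum_not_le {Q V : Z → ℝ} (hQ : IsPmf Q) (hV : IsPmf V) {G : Z → Prop} {b : ℝ}
    (h : ∀ z, G z → b * V z ≤ Q z) (m : ℕ) :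
    (∑ z with ¬G z, Q z) ^ m ≤ ∑ z with ¬G z, V z + Real.exp (-(m * b)) := by
  set v := ∑ z with ¬G z, V z
  have hv : 0 ≤ v := Finset.sum_nonneg fun z _ => hV.1 z
  have hVG : ∑ z with G z, V z = 1 - v :=
    eq_sub_of_add_eq ((Finset.sum_filter_add_sum_filter_not _ G V).trans hV.2)
  have hQG : ∑ z with G z, Q z = 1 - ∑ z with ¬G z, Q z :=
    eq_sub_of_add_eq ((Finset.sum_filter_add_sum_filter_not _ G Q).trans hQ.2)
  have hv1 : 0 ≤ 1 - v := hVG ▸ Finset.sum_nonneg fun z _ => hV.1 z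
  have hle : b * (1 - v) ≤ 1 - ∑ z with ¬G z, Q z := by
    rw [← hVG, ← hQG, Finset.mul_sum]
    exact Finset.sum_le_sum fun z hz => h z (Finset.mem_filter.1 hz).2
  have hconv := convexOn_exp.2 (Set.mem_univ 0) (Set.mem_univ (-(m * b))) hv hv1 (by ring)
  simp only [smul_eq_mul, mul_zero, zero_add, Real.exp_zero, mul_one] at hconv
  calc (∑ z with ¬G z, Q z) ^ m ≤ Real.exp (-(b * (1 - v))) ^ m := by
        refine pow_le_pow_left₀ (Finset.sum_nonneg fun z _ => hQ.1 z) ?_ m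
        linarith [Real.add_one_le_exp (-(b * (1 - v)))]
    _ = Real.exp ((1 - v) * -(m * b)) := by rw [← Real.exp_nat_mul]; ring_nf
    _ ≤ v + (1 - v) * Real.exp (-(m * b)) := hconv
    _ ≤ v + Real.exp (-(m * b)) := by
        gcongr
        exact mul_le_of_le_one_left (Real.exp_pos _).le (sub_le_self _ hv)

/-- Use a separate codebook for each value `t` of the side information. -/
lemma exists_sideInfo_code {P : S × T → ℝ} (hP : IsPmf P) {V : S × T → Z → ℝ} (hV : IsCondPmf V)
    {Q : T → Z → ℝ} (hQ : IsCondPmf Q) {G : S × T → Z → Prop} {b : ℝ}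
    (h : ∀ st, 0 < P st → ∀ z, G st z → b * V st z ≤ Q st.2 z) {m : ℕ} (hm : 0 < m) :
    ∃ (f : S × T → Fin m) (g : Fin m × T → Z), ∑ st with ¬G st (g (f st, st.2)), P st
      ≤ ∑ st, P st * ∑ z with ¬G st z, V st z + Real.exp (-(m * b)) := by
  choose c hc using fun t => exists_codebook (hQ t) (fun s => P (s, t)) (fun s => G (s, t)) m
  have hf (st : S × T) : ∃ k, (∃ k, G st (c st.2 k)) → G st (c st.2 k) := by
    by_cases hst : ∃ k, G st (c st.2 k)
    · exact hst.imp fun k hk _ => hk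
    · exact ⟨⟨0, hm⟩, fun h => absurd h hst⟩
  choose f hf using hf
  refine ⟨f, fun kt => c kt.2 kt.1, ?_⟩
  calc ∑ st with ¬G st (c st.2 (f st)), P st
      ≤ ∑ st with ∀ k, ¬G st (c st.2 k), P st :=
        Finset.sum_le_sum_of_subset_of_nonneg
          (Finset.monotone_filter_right _ fun st _ hst k hk => hst (hf st ⟨k, hk⟩))
          fun st _ _ => hP.1 st
    _ = ∑ t, ∑ s with ∀ k, ¬G (s, t) (c t k), P (s, t) := by
        simp only [Finset.sum_filter, Fintype.sum_prod_type_right]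
    _ ≤ ∑ t, ∑ s, P (s, t) * (∑ z with ¬G (s, t) z, Q t z) ^ m := Finset.sum_le_sum fun t _ => hc t
    _ = ∑ st, P st * (∑ z with ¬G st z, Q st.2 z) ^ m := by rw [Fintype.sum_prod_type_right]
    _ ≤ ∑ st, (P st * ∑ z with ¬G st z, V st z + P st * Real.exp (-(m * b))) := by
        refine Finset.sum_le_sum fun st _ => ?_
        rcases (hP.1 st).eq_or_lt with hst | hst
        · simp [← hst]
        · rw [← mul_add]
          exact mul_le_mul_of_nonneg_left (pow_sum_not_le (hQ _) (hV _) (h st hst) m) hst.le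
    _ = ∑ st, P st * ∑ z with ¬G st z, V st z + Real.exp (-(m * b)) := by
        rw [Finset.sum_add_distrib, ← Finset.sum_mul, hP.2, one_mul]

end Covering

variable {𝒳 𝒴 Xh Yh : Type} [Fintype 𝒳]

lemma delta1_le_add_mul_sum_not [Fintype 𝒴] {q : 𝒳 × 𝒴 → ℝ} (hq : IsPmf q)
    {δ : 𝒳 → Xh → ℝ} {d B : ℝ} (hδ : ∀ x z, δ x z ≤ d + B) {n m : ℕ} (hn : 0 < n)
    (f : (Fin n → 𝒳) × (Fin n → 𝒴) → Fin m) (g1 : Fin m × (Fin n → 𝒴) → Fin n → Xh)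
    {G : (Fin n → 𝒳) × (Fin n → 𝒴) → Prop}
    (hG : ∀ xy, G xy → ∑ i, δ (xy.1 i) (g1 (f xy, xy.2) i) ≤ n * d) :
    Delta1 q δ f g1 ≤ d + B * ∑ xy with ¬G xy, iid q n xy := by
  have hn : (0 : ℝ) < n := by exact_mod_cast hn
  have hterm (xy) : (n : ℝ)⁻¹ * ∑ i, δ (xy.1 i) (g1 (f xy, xy.2) i)
      ≤ d + B * if G xy then 0 else 1 := by
    rw [inv_mul_le_iff₀ hn]
    split_ifs with h
    · simpa using hG xy h
    · calc ∑ i, δ (xy.1 i) (g1 (f xy, xy.2) i) ≤ ∑ _i : Fin n, (d + B) :=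
            Finset.sum_le_sum fun i _ => hδ _ _
        _ = n * (d + B * 1) := by simp [mul_add]
  calc Delta1 q δ f g1 ≤ ∑ xy, iid q n xy * (d + B * if G xy then 0 else 1) :=
        Finset.sum_le_sum fun xy _ => mul_le_mul_of_nonneg_left (hterm xy) ((hq.iid n).1 xy)
    _ = d + B * ∑ xy with ¬G xy, iid q n xy := by
        simp only [mul_add, Finset.sum_add_distrib, ← Finset.sum_mul, (hq.iid n).2, one_mul,
          Finset.sum_filter, Finset.mul_sum]
        congr! 2 with xy
        split_ifs <;> ring

variable [Fintype Xh]

/-- Typicality of a block of letters `(x, y, x̂)`: its information density under `p` is at most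
`c` and its distortion at most `d` per letter. Only these one-sided bounds are needed. -/
def IsTypical {n : ℕ} (p : 𝒳 × 𝒴 × Xh → ℝ) (δ : 𝒳 → Xh → ℝ) (c d : ℝ)
    (a : Fin n → 𝒳 × 𝒴 × Xh) : Prop :=
  ∑ i, Real.logb 2 (condDensityRatio p (a i)) ≤ n * c ∧ ∑ i, δ (a i).1 (a i).2.2 ≤ n * d

lemma IsTypical.prod_condDensityRatio_le {n : ℕ} {p : 𝒳 × 𝒴 × Xh → ℝ} (hp : ∀ t, 0 ≤ p t)
    {δ : 𝒳 → Xh → ℝ} {c d : ℝ} {a : Fin n → 𝒳 × 𝒴 × Xh} (ha : IsTypical p δ c d a) :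
    ∏ i, condDensityRatio p (a i) ≤ 2 ^ (n * c) := by
  have hnonneg (i) (_ : i ∈ Finset.univ) := condDensityRatio_nonneg hp (a i)
  rcases (Finset.prod_nonneg hnonneg).eq_or_lt with h | h
  · rw [← h]
    positivity
  · rw [← Real.logb_le_iff_le_rpow one_lt_two h,
      Real.logb_prod _ _ fun i hi => Finset.prod_ne_zero_iff.1 h.ne' i hi]
    exact ha.1

variable [Fintype 𝒴]

lemma tendsto_sum_not_isTypical {p : 𝒳 × 𝒴 × Xh → ℝ} (hp : IsPmf p) {δ : 𝒳 → Xh → ℝ}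
    {c d : ℝ} (hc : condMI p < c) (hd : ∑ t, p t * δ t.1 t.2.2 < d) :
    Tendsto (fun n : ℕ => ∑ a : Fin n → 𝒳 × 𝒴 × Xh with ¬IsTypical p δ c d a, ∏ i, p (a i))
      atTop (𝓝 0) := by
  rw [condMI_eq_sum_mul_logb hp.1] at hc
  have htails := (hp.tendsto_upper_tail hc).add (hp.tendsto_upper_tail hd)
  rw [add_zero] at htails
  have hprod {n : ℕ} (a : Fin n → 𝒳 × 𝒴 × Xh) : 0 ≤ ∏ i, p (a i) :=
    Finset.prod_nonneg fun i _ => hp.1 _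
  refine squeeze_zero (fun n => Finset.sum_nonneg fun a _ => hprod a) (fun n => ?_) htails
  simp only [IsTypical, not_and_or, not_le, Finset.filter_or]
  exact (le_add_of_nonneg_right (Finset.sum_nonneg fun a _ => hprod a)).trans_eq
    Finset.sum_union_inter

lemma exists_code_sum_not_isTypical_le {q : 𝒳 × 𝒴 → ℝ} (hq : IsPmf q) {W : 𝒳 × 𝒴 → Xh → ℝ}
    (hW : IsCondPmf W) (δ : 𝒳 → Xh → ℝ) (c d : ℝ) (n : ℕ) {m : ℕ} (hm : 0 < m) :
    ∃ (f : (Fin n → 𝒳) × (Fin n → 𝒴) → Fin m) (g1 : Fin m × (Fin n → 𝒴) → Fin n → Xh),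
      ∑ xy with ¬IsTypical (jointLaw q W) δ c d fun i => (xy.1 i, xy.2 i, g1 (f xy, xy.2) i),
          iid q n xy
        ≤ ∑ a : Fin n → 𝒳 × 𝒴 × Xh with ¬IsTypical (jointLaw q W) δ c d a,
            ∏ i, jointLaw q W (a i) + Real.exp (-(m * ((2 : ℝ) ^ (n * c))⁻¹)) := by
  have hp := hq.jointLaw hW
  obtain ⟨xy⟩ := hq.nonempty
  have := (hW xy).nonempty
  obtain ⟨Q, hQ, hQp⟩ := exists_isCondPmf_mul_eq (q := fun y => ∑ x, q (x, y))
    (p := fun y z => ∑ x, jointLaw q W (x, y, z))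
    (fun y z => Finset.sum_nonneg fun x _ => hp.1 _) fun y => by
      rw [Finset.sum_comm]
      simp only [hW.sum_jointLaw]
  let V (xy : (Fin n → 𝒳) × (Fin n → 𝒴)) (z : Fin n → Xh) : ℝ := ∏ i, W (xy.1 i, xy.2 i) (z i)
  let Qn (y : Fin n → 𝒴) (z : Fin n → Xh) : ℝ := ∏ i, Q (y i) (z i)
  have hQn : IsCondPmf Qn := fun y => IsPmf.pi fun i => hQ (y i)
  let G (xy : (Fin n → 𝒳) × (Fin n → 𝒴)) (z : Fin n → Xh) : Prop :=
    IsTypical (jointLaw q W) δ c d fun i => (xy.1 i, xy.2 i, z i)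
  have hdensity (xy) (hxy : 0 < iid q n xy) (z) (hz : G xy z) :
      ((2 : ℝ) ^ (n * c))⁻¹ * V xy z ≤ Qn xy.2 z := by
    rw [inv_mul_le_iff₀ (by positivity)]
    calc V xy z = ∏ i, condDensityRatio (jointLaw q W) (xy.1 i, xy.2 i, z i) * Q (xy.2 i) (z i) :=
          Finset.prod_congr rfl fun i hi => eq_condDensityRatio_mul hq hW hQp
            ((hq.1 _).lt_of_ne' (Finset.prod_ne_zero_iff.1 hxy.ne' i hi)) (z i)
      _ ≤ 2 ^ (n * c) * Qn xy.2 z := by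
          rw [Finset.prod_mul_distrib]
          exact mul_le_mul_of_nonneg_right (hz.prod_condDensityRatio_le hp.1) ((hQn xy.2).1 z)
  obtain ⟨f, g, hfg⟩ := exists_sideInfo_code (hq.iid n)
    (fun xy => IsPmf.pi fun i => hW (xy.1 i, xy.2 i)) hQn hdensity hm
  refine ⟨f, g, hfg.trans_eq ?_⟩
  rw [Finset.sum_filter, ← sum_triple_comp_eq]
  simp only [iid, Finset.mul_sum, Finset.sum_filter, jointLaw, Finset.prod_mul_distrib,
    G, mul_ite, mul_zero]

lemma tendsto_exp_neg_floor_two_rpow_mul {a b : ℝ} (hb : 0 ≤ b) (hab : b < a) :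
    Tendsto (fun n : ℕ => Real.exp (-(⌊(2 : ℝ) ^ (n * a)⌋₊ * ((2 : ℝ) ^ (n * b))⁻¹)))
      atTop (𝓝 0) := by
  have hgrow : Tendsto (fun n : ℕ => ((2 : ℝ) ^ (a - b)) ^ n - 1) atTop atTop :=
    tendsto_atTop_add_const_right _ _
      (tendsto_pow_atTop_atTop_of_one_lt (Real.one_lt_rpow one_lt_two (sub_pos.2 hab)))
  refine Real.tendsto_exp_neg_atTop_nhds_zero.comp (tendsto_atTop_mono (fun n => ?_) hgrow)
  have hinv : ((2 : ℝ) ^ (n * b))⁻¹ ≤ 1 :=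
    inv_le_one_of_one_le₀ (Real.one_le_rpow one_le_two (by positivity))
  calc ((2 : ℝ) ^ (a - b)) ^ n - 1
      = 2 ^ (n * a) * (2 ^ (n * b))⁻¹ - 1 := by
        rw [← Real.rpow_natCast, ← Real.rpow_mul zero_le_two, ← Real.rpow_neg zero_le_two,
          ← Real.rpow_add two_pos]
        ring_nf
    _ ≤ (2 ^ (n * a) - 1) * (2 ^ (n * b))⁻¹ := by linarith
    _ ≤ ⌊(2 : ℝ) ^ (n * a)⌋₊ * (2 ^ (n * b))⁻¹ :=
        mul_le_mul_of_nonneg_right (Nat.sub_one_lt_floor _).le (by positivity)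

/-- The rate `I + ε` exceeds the density threshold `I + ε / 2`, so that the codewords
outnumber the `2 ^ (n (I + ε / 2))` needed to cover the typical blocks. -/
lemma eventually_exists_code {q : 𝒳 × 𝒴 → ℝ} (hq : IsPmf q) {δ : 𝒳 → Xh → ℝ} {d : ℝ}
    {W : 𝒳 × 𝒴 → Xh → ℝ} (hW : W ∈ testChannels q δ d) {ε : ℝ} (hε : 0 < ε) :
    ∀ᶠ n : ℕ in atTop, ∃ (m : ℕ) (f : (Fin n → 𝒳) × (Fin n → 𝒴) → Fin m)
      (g1 : Fin m × (Fin n → 𝒴) → Fin n → Xh),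
      Real.logb 2 m / n ≤ condMI (jointLaw q W) + ε ∧ Delta1 q δ f g1 ≤ d + ε := by
  have hp := hq.jointLaw hW.1
  set I := condMI (jointLaw q W)
  have hI : 0 ≤ I := hp.condMI_nonneg
  obtain ⟨B, hB0, hB⟩ :=
    (Set.finite_range fun t : 𝒳 × Xh => δ t.1 t.2 - (d + ε / 2)).bddAbove.exists_ge 0
  have hδ (x : 𝒳) (z : Xh) : δ x z ≤ d + ε / 2 + B :=
    sub_le_iff_le_add'.1 (hB _ ⟨(x, z), rfl⟩)
  have hatyp := tendsto_sum_not_isTypical hp (δ := δ) (c := I + ε / 2) (d := d + ε / 2)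
    (by linarith) (hW.2.trans_lt (by linarith))
  have hexp := tendsto_exp_neg_floor_two_rpow_mul (a := I + ε) (b := I + ε / 2)
    (by linarith) (by linarith)
  have hfail := (hatyp.add hexp).const_mul B
  rw [add_zero, mul_zero] at hfail
  filter_upwards [hfail.eventually (gt_mem_nhds (half_pos hε)), eventually_gt_atTop 0]
    with n hfail hn
  have hm : 0 < ⌊(2 : ℝ) ^ (n * (I + ε))⌋₊ :=
    Nat.floor_pos.2 (Real.one_le_rpow one_le_two (by positivity))
  obtain ⟨f, g1, hfg⟩ := exists_code_sum_not_isTypical_le hq hW.1 δ (I + ε / 2) (d + ε / 2) n hm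
  refine ⟨_, f, g1, ?_, ?_⟩
  · rw [div_le_iff₀' (by positivity), Real.logb_le_iff_le_rpow one_lt_two (by exact_mod_cast hm)]
    exact Nat.floor_le (by positivity)
  · have hdist := delta1_le_add_mul_sum_not hq hδ hn f g1
      (G := fun xy => IsTypical (jointLaw q W) δ (I + ε / 2) (d + ε / 2) fun i =>
        (xy.1 i, xy.2 i, g1 (f xy, xy.2) i)) fun _ h => h.2
    linarith [mul_le_mul_of_nonneg_left hfg hB0]

lemma rdAchievable_condMI {q : 𝒳 × 𝒴 → ℝ} (hq : IsPmf q) {δ1 : 𝒳 → Xh → ℝ} {δ2 : 𝒴 → Yh → ℝ}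
    {d1 d2 : ℝ} {W : 𝒳 × 𝒴 → Xh → ℝ} (hW : W ∈ testChannels q δ1 d1) {g : 𝒳 → Yh}
    (hg : ∑ xy, q xy * δ2 xy.2 (g xy.1) ≤ d2) :
    RDAchievable q δ1 δ2 d1 d2 (condMI (jointLaw q W)) := by
  intro ε hε
  obtain ⟨n, ⟨m, f, g1, hrate, hdist⟩, hn⟩ :=
    ((eventually_exists_code hq hW hε).and (eventually_gt_atTop 0)).exists
  refine ⟨n, m, f, g1, fun kx i => g (kx.2 i), hn, hrate, hdist, ?_⟩
  have : Delta2 q δ2 f (fun kx i => g (kx.2 i)) = ∑ xy, q xy * δ2 xy.2 (g xy.1) :=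
    hq.sum_iid_mul_average hn fun xy => δ2 xy.2 (g xy.1)
  linarith

end Achievability

section RateDistortionFunctions

variable {𝒳 𝒴 Xh Yh : Type} [Fintype 𝒳] [Fintype 𝒴] {q : 𝒳 × 𝒴 → ℝ}

lemma IsPmf.swap (hq : IsPmf q) : IsPmf (swap q) :=
  ⟨fun _ => hq.1 _, ((Equiv.prodComm 𝒴 𝒳).sum_comp q).trans hq.2⟩

lemma RDAchievable.swap {δ1 : 𝒳 → Xh → ℝ} {δ2 : 𝒴 → Yh → ℝ} {d1 d2 r : ℝ}
    (h : RDAchievable q δ1 δ2 d1 d2 r) : RDAchievable (swap q) δ2 δ1 d2 d1 r := by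
  intro ε hε
  obtain ⟨n, m, f, g1, g2, hn, hrate, hdist1, hdist2⟩ := h ε hε
  let e : (Fin n → 𝒴) × (Fin n → 𝒳) ≃ (Fin n → 𝒳) × (Fin n → 𝒴) := Equiv.prodComm _ _
  exact ⟨n, m, f ∘ e, g2, g1, hn, hrate,
    (e.sum_comp fun xy => iid q n xy * ((n : ℝ)⁻¹ * ∑ i, δ2 (xy.2 i) (g2 (f xy, xy.1) i))).trans_le
      hdist2,
    (e.sum_comp fun xy => iid q n xy * ((n : ℝ)⁻¹ * ∑ i, δ1 (xy.1 i) (g1 (f xy, xy.2) i))).trans_le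
      hdist1⟩

lemma rd_swap (q : 𝒳 × 𝒴 → ℝ) (δ1 : 𝒳 → Xh → ℝ) (δ2 : 𝒴 → Yh → ℝ) (d1 d2 : ℝ) :
    RD (swap q) δ2 δ1 d2 d1 = RD q δ1 δ2 d1 d2 :=
  congrArg sInf (Set.ext fun _ => and_congr_right fun _ => ⟨RDAchievable.swap, RDAchievable.swap⟩)

variable [Fintype Xh]

lemma condRD_eq_sInf_image (q : 𝒳 × 𝒴 → ℝ) (δ : 𝒳 → Xh → ℝ) (d : ℝ) :
    condRD q δ d = sInf ((fun W => condMI (jointLaw q W)) '' testChannels q δ d) := by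
  unfold condRD
  congr 1
  ext r
  simp only [testChannels, Set.mem_image, Set.mem_ofPred_eq, Fintype.sum_prod_type,
    and_assoc, eq_comm]
  rfl

lemma testChannels_nonempty {δ : 𝒳 → Xh → ℝ} (hδ : ∀ x, ∃ z, δ x z = 0) {d : ℝ} (hd : 0 ≤ d)
    (q : 𝒳 × 𝒴 → ℝ) : (testChannels q δ d).Nonempty := by
  choose z hz using hδ
  refine ⟨fun xy => Pi.single (z xy.1) 1, fun xy => ⟨fun c => ?_, by simp⟩, ?_⟩
  · exact (Pi.single_nonneg.2 zero_le_one : (0 : Xh → ℝ) ≤ _) c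
  · simpa [jointLaw, Fintype.sum_prod_type, Pi.single_apply, hz] using hd

lemma rd_eq_condRD (hq : IsPmf q) {δ1 : 𝒳 → Xh → ℝ} {δ2 : 𝒴 → Yh → ℝ} {d1 d2 : ℝ}
    (hne : (testChannels q δ1 d1).Nonempty) {g : 𝒳 → Yh}
    (hg : ∑ xy, q xy * δ2 xy.2 (g xy.1) ≤ d2) : RD q δ1 δ2 d1 d2 = condRD q δ1 d1 := by
  have hsub : (fun W => condMI (jointLaw q W)) '' testChannels q δ1 d1 ⊆
      {r | 0 ≤ r ∧ RDAchievable q δ1 δ2 d1 d2 r} := by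
    rintro - ⟨W, hW, rfl⟩
    exact ⟨(hq.jointLaw hW.1).condMI_nonneg, rdAchievable_condMI hq hW hg⟩
  have hbdd : BddBelow {r | 0 ≤ r ∧ RDAchievable q δ1 δ2 d1 d2 r} := ⟨0, fun _ hr => hr.1⟩
  rw [condRD_eq_sInf_image]
  refine le_antisymm (csInf_le_csInf hbdd (hne.image _) hsub)
    (le_csInf ((hne.image _).mono hsub) fun r hr => ?_)
  obtain ⟨W, hW, hWr⟩ := exists_mem_testChannels_of_rdAchievable hq hr.2
  exact csInf_le_of_le (hbdd.mono hsub) ⟨W, hW, rfl⟩ hWr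

end RateDistortionFunctions

end TWR

open TWR in
theorem rd_one_max_distortion_general
    {𝒳 𝒴 Xh Yh : Type} [Fintype 𝒳] [Fintype 𝒴] [Fintype Xh] [Fintype Yh]
    (q : 𝒳 × 𝒴 → ℝ) (hq : IsPmf q) (δ1 : 𝒳 → Xh → ℝ) (δ2 : 𝒴 → Yh → ℝ)
    (d1 d2 D1 D2 : ℝ) (hne1 : (testChannels q δ1 d1).Nonempty)
    (hne2 : (testChannels (TWR.swap q) δ2 d2).Nonempty) (g1 : 𝒴 → Xh) (g2 : 𝒳 → Yh)
    (hg1 : ∑ xy, q xy * δ1 xy.1 (g1 xy.2) ≤ D1) (hg2 : ∑ xy, q xy * δ2 xy.2 (g2 xy.1) ≤ D2) :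
    RD q δ1 δ2 d1 D2 = condRD q δ1 d1 ∧ RD q δ1 δ2 D1 d2 = condRD (TWR.swap q) δ2 d2 := by
  refine ⟨rd_eq_condRD hq hne1 hg2, ?_⟩
  rw [← rd_swap]
  exact rd_eq_condRD hq.swap hne2
    (((Equiv.prodComm 𝒴 𝒳).sum_comp fun xy => q xy * δ1 xy.1 (g1 xy.2)).trans_le hg1)

open TWR in
/-- Corollary 4: at one maximal distortion the RD function
collapses to a conditional RD function: `R(d1, d2max) = R_{X|Y}(d1)` and
`R(d1max, d2) = R_{Y|X}(d2)`. -/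
theorem rd_one_max_distortion
    {𝒳 𝒴 Xh Yh : Type} [Fintype 𝒳] [Fintype 𝒴] [Fintype Xh] [Fintype Yh]
    (q : 𝒳 × 𝒴 → ℝ) (hq : IsPmf q)
    (δ1 : 𝒳 → Xh → ℝ) (δ2 : 𝒴 → Yh → ℝ) (d1max d2max : ℝ)
    (hδ1 : ∀ x xh, 0 ≤ δ1 x xh ∧ δ1 x xh ≤ d1max)
    (hδ2 : ∀ y yh, 0 ≤ δ2 y yh ∧ δ2 y yh ≤ d2max)
    (hδ1n : ∀ x, ∃ xh, δ1 x xh = 0) (hδ2n : ∀ y, ∃ yh, δ2 y yh = 0)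
    (d1 d2 : ℝ) (hd1 : 0 ≤ d1) (hd2 : 0 ≤ d2) :
    RD q δ1 δ2 d1 d2max = condRD q δ1 d1 ∧
    RD q δ1 δ2 d1max d2 = condRD (swap q) δ2 d2 := by
  obtain ⟨x, y⟩ := hq.nonempty
  obtain ⟨xh, -⟩ := hδ1n x
  obtain ⟨yh, -⟩ := hδ2n y
  exact rd_one_max_distortion_general q hq δ1 δ2 d1 d2 d1max d2max
    (testChannels_nonempty hδ1n hd1 q) (testChannels_nonempty hδ2n hd2 (TWR.swap q))
    (fun _ => xh) (fun _ => yh) (hq.sum_mul_le fun xy => (hδ1 xy.1 xh).2)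
    (hq.sum_mul_le fun xy => (hδ2 xy.2 yh).2)
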